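/- arXiv:cs/0202018 — 4 statements merged into one kernel-verified Lean document; each statement's English description precedes it below -/
import Mathlib

section
/- Let L be a nonempty set and C : 2^L → 2^L. There exist a set M (of models) and a binary relation ⊨ ⊆ M × L such that C(A) = Th(Mod(A)) for every A ⊆ L if and only if C satisfies Inclusion (A ⊆ C(A) for all A ⊆ L), Idempotence (C(C(A)) = C(A) for all A ⊆ L), and Monotonicity (A ⊆ B implies C(A) ⊆ C(B)). -/
/-- Mod(A): the set of models satisfying every formula in A. -/
def ModSet {M L : Type} (sat : M → L → Prop) (A : Set L) : Set M :=
  {x | ∀ a ∈ A, sat x a}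

/-- Th(X): the set of formulas satisfied in every model of X. -/
def ThSet {M L : Type} (sat : M → L → Prop) (X : Set M) : Set L :=
  {a | ∀ x ∈ X, sat x a}

/-!
The maps Mod and Th are the two polars of the satisfaction relation, so they form an antitone Galois
connection and Th ∘ Mod is a closure operator. Conversely, let the models of a closure operator be
its closed sets, a closed set satisfying exactly the formulas it contains: then Th (Mod A) is the
intersection of the closed sets containing A, which is the closure of A.
-/

universe u

theorem exists_closureOperator_coe_eq_iff {α : Type*} [PartialOrder α] {f : α → α} :
    (∃ c : ClosureOperator α, c = f) ↔ (∀ x, x ≤ f x) ∧ (∀ x, f (f x) = f x) ∧ Monotone f := by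
  constructor
  · rintro ⟨c, rfl⟩
    exact ⟨c.le_closure, c.idempotent, c.monotone⟩
  · rintro ⟨le_map, map_map, mono⟩
    exact ⟨.mk' f mono le_map fun x => (map_map x).le, rfl⟩

theorem intentClosure_mem_closeds {L : Type*} (c : ClosureOperator (Set L)) :
    intentClosure (fun (T : c.Closeds) a => a ∈ T.1) = c := by
  ext1 A
  apply Set.Subset.antisymm
  · intro a ha
    exact ha (a := c.toCloseds A) (c.le_closure A)
  · intro a ha T hAT
    exact c.closure_min hAT T.2 ha

theorem stmt_0_general {L : Type u} (C : Set L → Set L) :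
    (∃ (M : Type u) (sat : M → L → Prop), ∀ A, C A = upperPolar sat (lowerPolar sat A)) ↔
      (∀ A, A ⊆ C A) ∧ (∀ A, C (C A) = C A) ∧ Monotone C := by
  refine Iff.trans ?_ exists_closureOperator_coe_eq_iff
  constructor
  · rintro ⟨M, sat, hC⟩
    exact ⟨intentClosure sat, funext fun A => (hC A).symm⟩
  · rintro ⟨c, rfl⟩
    refine ⟨c.Closeds, fun T a => a ∈ T.1, fun A => ?_⟩
    exact (DFunLike.congr_fun (intentClosure_mem_closeds c) A).symm

theorem thSet_modSet_eq_upperPolar_lowerPolar {M L : Type} (sat : M → L → Prop) (A : Set L) :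
    ThSet sat (ModSet sat A) = upperPolar sat (lowerPolar sat A) :=
  rfl

/-- Tarski's characterization of monotonic consequence operations. -/
theorem stmt_0 (L : Type) [Nonempty L] (C : Set L → Set L) :
    (∃ (M : Type) (sat : M → L → Prop),
        ∀ A : Set L, C A = ThSet sat (ModSet sat A)) ↔
    ((∀ A : Set L, A ⊆ C A) ∧
     (∀ A : Set L, C (C A) = C A) ∧
     (∀ A B : Set L, A ⊆ B → C A ⊆ C B)) := by
  simp only [thSet_modSet_eq_upperPolar_lowerPolar]
  exact stmt_0_general C
end

section
/- Let L be a nonempty set and C : 2^L → 2^L. The following are equivalent: (1) C satisfies Inclusion (A ⊆ C(A)), Idempotence (C(C(A)) = C(A)), Cautious Monotonicity (A ⊆ B ⊆ C(A) implies C(A) ⊆ C(B)), Conditional Monotonicity (C(A ∪ B) ⊆ C(C(A) ∪ B)), and Threshold Monotonicity (C(A) ⊆ B ⊆ B' implies C(B) ⊆ C(B')); (2) there exist a set M, a binary relation ⊨ ⊆ M × L, and a function f from definable subsets of M to subsets of M such that f preserves definability (f(Mod(A)) = Mod(Th(f(Mod(A)))) for all A ⊆ L), f satisfies Contraction, Coherence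 and Local Monotonicity on definable sets, and C(A) = Th(f(Mod(A))) for all A ⊆ L. -/
/-- A set of models is definable iff it is the set of models of its theory. -/
def IsDefinable {M L : Type} (sat : M → L → Prop) (X : Set M) : Prop :=
  X = ModSet sat (ThSet sat X)

/-!
By Contraction and Coherence, `f` is the identity on every definable subset of `f Y`, for `Y`
definable. Hence above a threshold `C A` the operation `C` is the monotone consequence
`B ↦ Th (Mod B)`, which yields Idempotence, Conditional and Threshold Monotonicity. Conversely, take
as models the theories of `C`, that is the sets `T` with `C T = T`, let `T` satisfy exactly its
members, and let `f X` be the set of theories containing `C (Th X)`.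
-/

open Function Order

universe u v

variable {L : Type u} {M : Type v}

/-- Consequence operations characterised by Inclusion, Idempotence, Cautious Monotonicity,
Conditional Monotonicity and Threshold Monotonicity. -/
structure IsCoherentConsequence (C : Set L → Set L) : Prop where
  inclusion : ∀ A, A ⊆ C A
  idempotence : ∀ A, C (C A) = C A
  cautiousMonotonicity : ∀ ⦃A B⦄, A ⊆ B → B ⊆ C A → C A ⊆ C B
  conditionalMonotonicity : ∀ A B, C (A ∪ B) ⊆ C (C A ∪ B)
  thresholdMonotonicity : ∀ ⦃A B B'⦄, C A ⊆ B → B ⊆ B' → C B ⊆ C B'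

/-- Definability-preserving choice functions that satisfy Contraction, Coherence and Local
Monotonicity on definable sets. The definable sets are the extents of `sat`; the values of `f` on
other sets are irrelevant. -/
structure IsCoherentChoice (sat : M → L → Prop) (f : Set M → Set M) : Prop where
  isExtent_apply : ∀ A, IsExtent sat (f (lowerPolar sat A))
  contraction : ∀ ⦃X⦄, IsExtent sat X → f X ⊆ X
  coherence : ∀ ⦃X Y⦄, IsExtent sat X → IsExtent sat Y → X ⊆ Y → X ∩ f Y ⊆ f X
  localMonotonicity : ∀ ⦃X Y⦄, IsExtent sat X → IsExtent sat Y → f X ⊆ Y → Y ⊆ X → f Y ⊆ f X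

/-- The consequence operation `A ↦ Th (f (Mod A))` defined by the choice function `f`. -/
def choiceConsequence (sat : M → L → Prop) (f : Set M → Set M) (A : Set L) : Set L :=
  upperPolar sat (f (lowerPolar sat A))

namespace IsCoherentChoice

variable {sat : M → L → Prop} {f : Set M → Set M} {X Y : Set M} {A B : Set L}

theorem lowerPolar_choiceConsequence (h : IsCoherentChoice sat f) (A : Set L) :
    lowerPolar sat (choiceConsequence sat f A) = f (lowerPolar sat A) :=
  (h.isExtent_apply A).eq

theorem apply_eq_self_of_subset_apply (h : IsCoherentChoice sat f) (hX : IsExtent sat X)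
    (hY : IsExtent sat Y) (hXY : X ⊆ f Y) : f X = X :=
  (h.contraction hX).antisymm fun _ hx ↦
    h.coherence hX hY (hXY.trans (h.contraction hY)) ⟨hx, hXY hx⟩

theorem choiceConsequence_eq_of_subset (h : IsCoherentChoice sat f)
    (hAB : choiceConsequence sat f A ⊆ B) :
    choiceConsequence sat f B = upperPolar sat (lowerPolar sat B) := by
  have hB : lowerPolar sat B ⊆ f (lowerPolar sat A) :=
    h.lowerPolar_choiceConsequence A ▸ lowerPolar_anti sat hAB
  rw [choiceConsequence,
    h.apply_eq_self_of_subset_apply isExtent_lowerPolar isExtent_lowerPolar hB]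

theorem subset_choiceConsequence (h : IsCoherentChoice sat f) (A : Set L) :
    A ⊆ choiceConsequence sat f A :=
  subset_upperPolar_iff_subset_lowerPolar.2 (h.contraction isExtent_lowerPolar)

theorem choiceConsequence_idem (h : IsCoherentChoice sat f) (A : Set L) :
    choiceConsequence sat f (choiceConsequence sat f A) = choiceConsequence sat f A := by
  rw [h.choiceConsequence_eq_of_subset subset_rfl, h.lowerPolar_choiceConsequence,
    choiceConsequence]

theorem choiceConsequence_subset_of_subset (h : IsCoherentChoice sat f) (hAB : A ⊆ B)
    (hBA : B ⊆ choiceConsequence sat f A) :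
    choiceConsequence sat f A ⊆ choiceConsequence sat f B :=
  upperPolar_anti sat <| h.localMonotonicity isExtent_lowerPolar isExtent_lowerPolar
    (subset_upperPolar_iff_subset_lowerPolar.1 hBA) (lowerPolar_anti sat hAB)

theorem choiceConsequence_union_subset (h : IsCoherentChoice sat f) (A B : Set L) :
    choiceConsequence sat f (A ∪ B) ⊆ choiceConsequence sat f (choiceConsequence sat f A ∪ B) := by
  have hsub : f (lowerPolar sat A) ∩ lowerPolar sat B ⊆ lowerPolar sat (A ∪ B) := by
    rw [lowerPolar_union]
    exact Set.inter_subset_inter_left _ (h.contraction isExtent_lowerPolar)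
  have hchoice : f (lowerPolar sat A) ∩ lowerPolar sat B ⊆ f (lowerPolar sat (A ∪ B)) :=
    fun _ hx ↦ h.coherence isExtent_lowerPolar isExtent_lowerPolar
      (lowerPolar_anti sat Set.subset_union_left) ⟨hsub hx, hx.1⟩
  rw [h.choiceConsequence_eq_of_subset Set.subset_union_left, lowerPolar_union,
    h.lowerPolar_choiceConsequence]
  exact upperPolar_anti sat hchoice

theorem choiceConsequence_subset_of_threshold (h : IsCoherentChoice sat f) {B' : Set L}
    (hAB : choiceConsequence sat f A ⊆ B) (hBB' : B ⊆ B') :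
    choiceConsequence sat f B ⊆ choiceConsequence sat f B' := by
  rw [h.choiceConsequence_eq_of_subset hAB, h.choiceConsequence_eq_of_subset (hAB.trans hBB')]
  exact upperPolar_lowerPolar_monotone sat hBB'

theorem isCoherentConsequence (h : IsCoherentChoice sat f) :
    IsCoherentConsequence (choiceConsequence sat f) where
  inclusion := h.subset_choiceConsequence
  idempotence := h.choiceConsequence_idem
  cautiousMonotonicity _ _ := h.choiceConsequence_subset_of_subset
  conditionalMonotonicity := h.choiceConsequence_union_subset
  thresholdMonotonicity _ _ _ := h.choiceConsequence_subset_of_threshold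

end IsCoherentChoice

/-- The satisfaction relation of the canonical model, whose points are the theories of `C`: a theory
satisfies exactly its members. -/
def theorySat (C : Set L → Set L) (T : fixedPoints C) (a : L) : Prop :=
  a ∈ T.1

/-- The choice function of the canonical model: the theories that contain `C (Th X)`. -/
def theoryChoice (C : Set L → Set L) (X : Set (fixedPoints C)) : Set (fixedPoints C) :=
  lowerPolar (theorySat C) (C (upperPolar (theorySat C) X))

theorem isIntent_theorySat {C : Set L → Set L} {T : Set L} (hT : T ∈ fixedPoints C) :
    IsIntent (theorySat C) T :=
  ⟨{⟨T, hT⟩}, Set.ext fun _ ↦ mem_upperPolar_singleton _⟩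

namespace IsCoherentConsequence

variable {C : Set L → Set L} {A B T : Set L}

theorem apply_eq_of_subset_of_subset (h : IsCoherentConsequence C) (hAB : A ⊆ B)
    (hBA : B ⊆ C A) : C B = C A := by
  refine Set.Subset.antisymm ?_ (h.cautiousMonotonicity hAB hBA)
  calc
    C B = C (A ∪ B) := by rw [Set.union_eq_right.2 hAB]
    _ ⊆ C (C A ∪ B) := h.conditionalMonotonicity A B
    _ = C (C A) := by rw [Set.union_eq_left.2 hBA]
    _ = C A := h.idempotence A

theorem apply_subset_of_subset_fixedPoint (h : IsCoherentConsequence C) (hT : T ∈ fixedPoints C)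
    (hAB : A ⊆ B) (hBT : B ⊆ T) (hAT : C A ⊆ T) : C B ⊆ T :=
  calc
    C B = C (A ∪ B) := by rw [Set.union_eq_right.2 hAB]
    _ ⊆ C (C A ∪ B) := h.conditionalMonotonicity A B
    _ ⊆ C T := h.thresholdMonotonicity Set.subset_union_left (Set.union_subset hAT hBT)
    _ = T := hT

theorem upperPolar_theoryChoice (h : IsCoherentConsequence C) (X : Set (fixedPoints C)) :
    upperPolar (theorySat C) (theoryChoice C X) = C (upperPolar (theorySat C) X) :=
  (isIntent_theorySat (h.idempotence _)).eq

theorem choiceConsequence_theoryChoice (h : IsCoherentConsequence C) :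
    choiceConsequence (theorySat C) (theoryChoice C) = C := by
  funext A
  rw [choiceConsequence, h.upperPolar_theoryChoice]
  exact h.apply_eq_of_subset_of_subset (subset_upperPolar_lowerPolar _ A)
    ((isIntent_theorySat (h.idempotence A)).upperPolar_lowerPolar_subset (h.inclusion A))

theorem theoryChoice_subset (h : IsCoherentConsequence C) {X : Set (fixedPoints C)}
    (hX : IsExtent (theorySat C) X) : theoryChoice C X ⊆ X :=
  (lowerPolar_anti _ (h.inclusion _)).trans hX.eq.subset

theorem inter_theoryChoice_subset (h : IsCoherentConsequence C) {X Y : Set (fixedPoints C)}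
    (hXY : X ⊆ Y) : X ∩ theoryChoice C Y ⊆ theoryChoice C X :=
  fun T ⟨hTX, hTY⟩ ↦ h.apply_subset_of_subset_fixedPoint T.2 (upperPolar_anti _ hXY)
    (fun _ ha ↦ ha hTX) hTY

theorem theoryChoice_subset_theoryChoice (h : IsCoherentConsequence C)
    {X Y : Set (fixedPoints C)} (hXY : theoryChoice C X ⊆ Y) (hYX : Y ⊆ X) :
    theoryChoice C Y ⊆ theoryChoice C X :=
  lowerPolar_anti _ <| h.cautiousMonotonicity (upperPolar_anti _ hYX) <|
    h.upperPolar_theoryChoice X ▸ upperPolar_anti _ hXY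

theorem isCoherentChoice (h : IsCoherentConsequence C) :
    IsCoherentChoice (theorySat C) (theoryChoice C) where
  isExtent_apply _ := isExtent_lowerPolar
  contraction _ := h.theoryChoice_subset
  coherence _ _ _ _ := h.inter_theoryChoice_subset
  localMonotonicity _ _ _ _ := h.theoryChoice_subset_theoryChoice

end IsCoherentConsequence

theorem isCoherentConsequence_iff (C : Set L → Set L) :
    IsCoherentConsequence C ↔
      (∀ A, A ⊆ C A) ∧ (∀ A, C (C A) = C A) ∧ (∀ A B, A ⊆ B → B ⊆ C A → C A ⊆ C B) ∧
      (∀ A B, C (A ∪ B) ⊆ C (C A ∪ B)) ∧ (∀ A B B', C A ⊆ B → B ⊆ B' → C B ⊆ C B') :=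
  ⟨fun ⟨inc, idem, cautious, cond, thr⟩ ↦ ⟨inc, idem, cautious, cond, thr⟩,
    fun ⟨inc, idem, cautious, cond, thr⟩ ↦ ⟨inc, idem, cautious, cond, thr⟩⟩

theorem isDefinable_iff_isExtent {M L : Type} {sat : M → L → Prop} {X : Set M} :
    IsDefinable sat X ↔ IsExtent sat X :=
  eq_comm.trans isExtent_iff.symm

theorem isCoherentChoice_iff {M L : Type} (sat : M → L → Prop) (f : Set M → Set M) :
    IsCoherentChoice sat f ↔
      (∀ A, IsDefinable sat (f (ModSet sat A))) ∧
      (∀ X, IsDefinable sat X → f X ⊆ X) ∧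
      (∀ X Y, IsDefinable sat X → IsDefinable sat Y → X ⊆ Y → X ∩ f Y ⊆ f X) ∧
      (∀ X Y, IsDefinable sat X → IsDefinable sat Y → f X ⊆ Y → Y ⊆ X → f Y ⊆ f X) := by
  simp only [isDefinable_iff_isExtent]
  exact ⟨fun ⟨ext, contr, coh, mono⟩ ↦ ⟨ext, contr, coh, mono⟩,
    fun ⟨ext, contr, coh, mono⟩ ↦ ⟨ext, contr, coh, mono⟩⟩

theorem stmt_8_general (C : Set L → Set L) :
    IsCoherentConsequence C ↔
      ∃ (M : Type u) (sat : M → L → Prop) (f : Set M → Set M),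
        IsCoherentChoice sat f ∧ C = choiceConsequence sat f := by
  constructor
  · intro h
    exact ⟨fixedPoints C, theorySat C, theoryChoice C, h.isCoherentChoice,
      h.choiceConsequence_theoryChoice.symm⟩
  · rintro ⟨M, sat, f, hf, rfl⟩
    exact hf.isCoherentConsequence

/-- Main representation theorem: the five conditions on C characterize the
operations defined by definability-preserving choice functions satisfying
Contraction, Coherence and Local Monotonicity on definable sets. -/
theorem stmt_8 (L : Type) [Nonempty L] (C : Set L → Set L) :
    ((∀ A : Set L, A ⊆ C A) ∧
     (∀ A : Set L, C (C A) = C A) ∧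
     (∀ A B : Set L, A ⊆ B → B ⊆ C A → C A ⊆ C B) ∧
     (∀ A B : Set L, C (A ∪ B) ⊆ C (C A ∪ B)) ∧
     (∀ A B B' : Set L, C A ⊆ B → B ⊆ B' → C B ⊆ C B')) ↔
    (∃ (M : Type) (sat : M → L → Prop) (f : Set M → Set M),
      (∀ A : Set L, f (ModSet sat A) = ModSet sat (ThSet sat (f (ModSet sat A)))) ∧
      (∀ X : Set M, IsDefinable sat X → f X ⊆ X) ∧
      (∀ X Y : Set M, IsDefinable sat X → IsDefinable sat Y →
        X ⊆ Y → X ∩ f Y ⊆ f X) ∧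
      (∀ X Y : Set M, IsDefinable sat X → IsDefinable sat Y →
        f X ⊆ Y → Y ⊆ X → f Y ⊆ f X) ∧
      (∀ A : Set L, C A = ThSet sat (f (ModSet sat A)))) := by
  have h := stmt_8_general C
  simp only [isCoherentConsequence_iff, isCoherentChoice_iff, and_assoc, funext_iff] at h
  exact h
end

section
/- Let L be a set and C : 2^L → 2^L satisfy Inclusion (A ⊆ C(A)), Idempotence (C(C(A)) = C(A)) and Cautious Monotonicity (A ⊆ B ⊆ C(A) implies C(A) ⊆ C(B)). Define Cn(A) = ⋂_{B ⊆ L} C(A ∪ B). Then Right Absorption holds: C(Cn(A)) = C(A) for every A ⊆ L. -/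
/-- The operator `Cn` derived from `C`, for an arbitrary complete lattice in place of `Set L`.
It is the greatest monotone operator below `C`. -/
def monotoneCore {α : Type*} [CompleteLattice α] (C : α → α) (a : α) : α :=
  ⨅ b, C (a ⊔ b)

section CompleteLattice

variable {α : Type*} [CompleteLattice α] {C : α → α}

theorem le_monotoneCore (hIncl : ∀ a, a ≤ C a) (a : α) : a ≤ monotoneCore C a :=
  le_iInf fun b => le_sup_left.trans (hIncl (a ⊔ b))

theorem monotoneCore_le (C : α → α) (a : α) : monotoneCore C a ≤ C a :=
  (iInf_le _ ⊥).trans_eq (congrArg C (sup_bot_eq a))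

end CompleteLattice

theorem apply_eq_of_le_of_le_apply {α : Type*} [PartialOrder α] {C : α → α}
    (hIdem : ∀ a, C (C a) = C a) (hCM : ∀ a b, a ≤ b → b ≤ C a → C a ≤ C b)
    {a b : α} (hab : a ≤ b) (hba : b ≤ C a) : C b = C a := by
  have le_apply : C a ≤ C b := hCM a b hab hba
  have apply_le : C b ≤ C (C a) := hCM b (C a) hba le_apply
  exact (apply_le.trans_eq (hIdem a)).antisymm le_apply

theorem stmt_13_general {α : Type*} [CompleteLattice α] (C : α → α)
    (hIncl : ∀ a, a ≤ C a) (hIdem : ∀ a, C (C a) = C a)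
    (hCM : ∀ a b, a ≤ b → b ≤ C a → C a ≤ C b) (a : α) :
    C (monotoneCore C a) = C a :=
  apply_eq_of_le_of_le_apply hIdem hCM (le_monotoneCore hIncl a) (monotoneCore_le C a)

/-- Right Absorption: C(Cn(A)) = C(A), where Cn(A) = ⋂_{B ⊆ L} C(A ∪ B). -/
theorem stmt_13 {L : Type} (C : Set L → Set L)
    (hIncl : ∀ A : Set L, A ⊆ C A)
    (hIdem : ∀ A : Set L, C (C A) = C A)
    (hCM : ∀ A B : Set L, A ⊆ B → B ⊆ C A → C A ⊆ C B) :
    ∀ A : Set L, C (⋂ B : Set L, C (A ∪ B)) = C A :=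
  stmt_13_general C hIncl hIdem hCM
end

section
/- Let M be a set. (i) If a binary relation > on 2^M satisfies W ⊇ X > Y ⊇ Z implies W > Z, and Modularity (X > Y and not X > Z imply Z > Y), then the function f defined by letting f(X) be the set of heavy elements of X satisfies Arrow: X ⊆ Y and X ∩ f(Y) ≠ ∅ imply f(X) ⊆ f(Y). (ii) If f : 2^M → 2^M satisfies Contraction, Coherence, Local Monotonicity and Arrow, then the relation > defined by X > Y iff f(X) ≠ ∅ and Y ∩ f(X ∪ Y) = ∅ satisfies Modularity. -/
/-!
Modularity implies Arrow: let `X ⊆ Y` and let `z ∈ X` be heavy in `Y`. If `Y > {x}`, then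
`{z} > {x}` by modularity, so `X > {x}`; thus what is heavy in `X` is heavy in `Y`.

Arrow implies modularity: suppose `x` dominates `y` but not `z`, and that `f (z ⊔ y)` meets `y`. Put
`u = x ⊔ y ⊔ z`. Coherence makes `y` miss `f u`, so by Arrow all of `z ⊔ y` misses `f u`. Since
`f (x ⊔ z)` meets `z`, which misses `f u`, Arrow again makes all of `x ⊔ z` miss `f u`. Hence
`f u = ⊥`, which local monotonicity forbids because `f x ≠ ⊥`.
-/

namespace QualitativeMeasure

variable {M L : Type*}

/-- Modularity of a relation read as "is much larger than": anything that `x` does not exceed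
exceeds everything that `x` does. -/
def IsModular (gt : L → L → Prop) : Prop :=
  ∀ ⦃x y z⦄, gt x y → ¬gt x z → gt z y

/-- The choice function of a relation between sets: it selects the heavy elements of a set, those
whose singleton the set does not exceed. -/
def heavy (gt : Set M → Set M → Prop) (X : Set M) : Set M :=
  {x ∈ X | ¬gt X {x}}

section Axioms

variable [SemilatticeInf L]

/-- Coherence of a choice function, with a semilattice in place of the subsets of a set. -/
def IsCoherent (f : L → L) : Prop :=
  ∀ ⦃x y⦄, x ≤ y → x ⊓ f y ≤ f x

/-- Local monotonicity of a choice function: shrinking `x` without losing any of its choices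
creates no new choices. -/
def IsLocallyMonotone (f : L → L) : Prop :=
  ∀ ⦃x y⦄, f x ≤ y → y ≤ x → f y ≤ f x

variable [OrderBot L]

/-- Arrow's condition on a choice function: if some choice from `y` is already available in `x`,
then everything chosen from `x` is chosen from `y`. -/
def IsArrovian (f : L → L) : Prop :=
  ∀ ⦃x y⦄, x ≤ y → x ⊓ f y ≠ ⊥ → f x ≤ f y

variable {f : L → L} {a x y : L}

theorem IsCoherent.ne_bot_of_not_disjoint (hf : IsCoherent f) (hxy : x ≤ y)
    (h : ¬Disjoint x (f y)) : f x ≠ ⊥ :=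
  ne_bot_of_le_ne_bot (mt disjoint_iff.mpr h) (hf hxy)

theorem IsCoherent.disjoint_of_le (hf : IsCoherent f) (hax : a ≤ x) (hxy : x ≤ y)
    (h : Disjoint a (f x)) : Disjoint a (f y) := by
  rw [← inf_eq_left.mpr hax, disjoint_assoc]
  exact h.mono_right (hf hxy)

theorem IsArrovian.disjoint_of_not_disjoint (hf : IsArrovian f) (hxy : x ≤ y)
    (hx : ¬Disjoint a (f x)) (hy : Disjoint a (f y)) : Disjoint x (f y) := by
  by_contra h
  exact hx (hy.mono_right (hf hxy (mt disjoint_iff.mpr h)))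

theorem IsLocallyMonotone.eq_bot_of_le (hf : IsLocallyMonotone f) (hxy : x ≤ y)
    (hy : f y = ⊥) : f x = ⊥ :=
  le_bot_iff.mp (hy ▸ hf (hy ▸ bot_le) hxy)

end Axioms

/-- The relation induced by a choice function: `x` is much larger than `y` when something is
chosen from `x` but nothing in `y` is chosen from `x ⊔ y`. -/
def Dominates [Lattice L] [OrderBot L] (f : L → L) (x y : L) : Prop :=
  f x ≠ ⊥ ∧ y ⊓ f (x ⊔ y) = ⊥

theorem IsModular.isArrovian_heavy {gt : Set M → Set M → Prop} (hmod : IsModular gt)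
    (hmono : Monotone gt) : IsArrovian (heavy gt) := by
  intro X Y hXY hne x hx
  obtain ⟨z, hzX, -, hz⟩ := Set.nonempty_iff_ne_empty.mpr hne
  refine ⟨hXY hx.1, fun hYx => hx.2 ?_⟩
  have hzx : gt {z} {x} := hmod hYx hz
  exact hmono (Set.singleton_subset_iff.mpr hzX) {x} hzx

theorem IsArrovian.isModular_dominates [DistribLattice L] [OrderBot L] {f : L → L}
    (harrow : IsArrovian f) (hcontr : ∀ x, f x ≤ x) (hcoh : IsCoherent f)
    (hloc : IsLocallyMonotone f) : IsModular (Dominates f) := by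
  rintro x y z ⟨hx, hxy⟩ hxz
  have hz : ¬Disjoint z (f (x ⊔ z)) := fun h => hxz ⟨hx, h.eq_bot⟩
  refine ⟨hcoh.ne_bot_of_not_disjoint le_sup_right hz, ?_⟩
  by_contra hy
  rw [← disjoint_iff] at hxy hy
  set u := x ⊔ y ⊔ z
  have hxu : x ≤ u := le_sup_left.trans le_sup_left
  have hyu : y ≤ u := le_sup_right.trans le_sup_left
  have hzu : z ≤ u := le_sup_right
  have y_misses : Disjoint y (f u) := hcoh.disjoint_of_le le_sup_right le_sup_left hxy
  have zy_misses : Disjoint (z ⊔ y) (f u) :=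
    harrow.disjoint_of_not_disjoint (sup_le hzu hyu) hy y_misses
  have z_misses : Disjoint z (f u) := zy_misses.mono_left le_sup_left
  have xz_misses : Disjoint (x ⊔ z) (f u) :=
    harrow.disjoint_of_not_disjoint (sup_le hxu hzu) hz z_misses
  have u_misses : Disjoint u (f u) :=
    ((xz_misses.mono_left le_sup_left).sup_left y_misses).sup_left z_misses
  exact hx (hloc.eq_bot_of_le hxu (u_misses.symm.eq_bot_of_le (hcontr u)))

end QualitativeMeasure

open QualitativeMeasure in
theorem stmt_19_general {M L : Type*} [DistribLattice L] [OrderBot L] :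
    (∀ gt : Set M → Set M → Prop, Monotone gt → IsModular gt → IsArrovian (heavy gt)) ∧
    (∀ f : L → L, (∀ x, f x ≤ x) → IsCoherent f → IsLocallyMonotone f → IsArrovian f →
      IsModular (Dominates f)) :=
  ⟨fun _ hmono hmod => hmod.isArrovian_heavy hmono,
    fun _ hcontr hcoh hloc harrow => harrow.isModular_dominates hcontr hcoh hloc⟩

/-- Modularity of a qualitative measure corresponds to Arrow's condition on
the associated choice function, in both directions. -/
theorem stmt_19 (M : Type) :
    (∀ gt : Set M → Set M → Prop,
      (∀ W X Y Z : Set M, X ⊆ W → gt X Y → Z ⊆ Y → gt W Z) →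
      (∀ X Y Z : Set M, gt X Y → ¬ gt X Z → gt Z Y) →
      ∀ X Y : Set M, X ⊆ Y →
        X ∩ {y ∈ Y | ¬ gt Y {y}} ≠ ∅ →
        {x ∈ X | ¬ gt X {x}} ⊆ {y ∈ Y | ¬ gt Y {y}}) ∧
    (∀ f : Set M → Set M,
      (∀ X : Set M, f X ⊆ X) →
      (∀ X Y : Set M, X ⊆ Y → X ∩ f Y ⊆ f X) →
      (∀ X Y : Set M, f X ⊆ Y → Y ⊆ X → f Y ⊆ f X) →
      (∀ X Y : Set M, X ⊆ Y → X ∩ f Y ≠ ∅ → f X ⊆ f Y) →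
      ∀ X Y Z : Set M,
        (f X ≠ ∅ ∧ Y ∩ f (X ∪ Y) = ∅) →
        ¬ (f X ≠ ∅ ∧ Z ∩ f (X ∪ Z) = ∅) →
        (f Z ≠ ∅ ∧ Y ∩ f (Z ∪ Y) = ∅)) := by
  have general := stmt_19_general (M := M) (L := Set M)
  exact ⟨fun gt hmono => general.1 gt fun X W h Y hXY => hmono W X Y Y h hXY subset_rfl,
    general.2⟩
end
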